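/- Every S-ring over the elementary abelian group E_9 of order 9 is Cayley isomorphic to one of the following: (1) Cyc(M, 𝔽_9), the S-ring over the additive group of the field 𝔽_9 of order 9 whose basic sets are the orbits of a nontrivial subgroup M of the multiplicative group 𝔽_9^× acting on 𝔽_9 by multiplication; (2) the tensor product of two S-rings over cyclic groups of order 3; (3) the wreath product of two S-rings over cyclic groups of order 3. -/

import Mathlib

open scoped Pointwise

/-- The element `\underline{X} = Σ_{x∈X} x` of the integral group ring `ℤG`. -/
noncomputable def grpSum {G : Type*} [Group G] [Fintype G] (X : Set G) :
    MonoidAlgebra ℤ G :=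
  ∑ x : G, X.indicator (fun g => MonoidAlgebra.single g (1 : ℤ)) x

/-- A Schur ring (S-ring) over a finite group `G`, described by its partition
into basic sets: (S1) `{1}` is a basic set, (S2) the class of basic sets is
closed under inverses, (S3) the ℤ-span of the sums `\underline{X}` is closed
under multiplication (i.e. is a subring of `ℤG`). -/
structure SchurRing (G : Type*) [Group G] [Fintype G] where
  basicSets : Set (Set G)
  nonempty_mem : ∀ X ∈ basicSets, X.Nonempty
  cover : ∀ g : G, ∃ X ∈ basicSets, g ∈ X
  disjoint' : ∀ X ∈ basicSets, ∀ Y ∈ basicSets, X ≠ Y → X ∩ Y = ∅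
  one_mem : {(1 : G)} ∈ basicSets
  inv_mem : ∀ X ∈ basicSets, X⁻¹ ∈ basicSets
  mul_mem : ∀ X ∈ basicSets, ∀ Y ∈ basicSets,
    grpSum X * grpSum Y ∈ Submodule.span ℤ (grpSum '' basicSets)

namespace SchurRing

variable {G : Type*} [Group G] [Fintype G]

/-- An `𝒜`-set: a union of basic sets. -/
def IsASet (A : SchurRing G) (S : Set G) : Prop :=
  ∃ T ⊆ A.basicSets, S = ⋃₀ T

/-- An `𝒜`-subgroup: a subgroup that is an `𝒜`-set. -/
def IsASubgroup (A : SchurRing G) (H : Subgroup G) : Prop :=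
  A.IsASet (H : Set G)

/-- `𝒜` is schurian: its basic sets are the orbits of the stabilizer of `1`
in some group `K` with `G_right ≤ K ≤ Sym(G)`. -/
def IsSchurian (A : SchurRing G) : Prop :=
  ∃ K : Subgroup (Equiv.Perm G), (∀ g : G, Equiv.mulRight g ∈ K) ∧
    A.basicSets = Set.range fun x : G =>
      MulAction.orbit (MulAction.stabilizer K (1 : G)) x

/-- `𝒜` is cyclotomic: its basic sets are the orbits of a subgroup of `Aut(G)`. -/
def IsCyclotomic (A : SchurRing G) : Prop :=
  ∃ M : Subgroup (MulAut G),
    A.basicSets = Set.range fun x : G => MulAction.orbit M x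

/-- `𝒜` is trivial: its basic sets are `{1}` and `G ∖ {1}`. -/
def IsTrivial (A : SchurRing G) : Prop :=
  A.basicSets ⊆ {{(1 : G)}, {(1 : G)}ᶜ}

/-- `𝒜 = 𝒜_H ⊗ 𝒜_K`: an internal tensor product decomposition of `𝒜`
with respect to the internal direct product `G = H × K`. -/
def IsTensorDecomp (A : SchurRing G) (H K : Subgroup G) : Prop :=
  A.IsASubgroup H ∧ A.IsASubgroup K ∧ H ⊓ K = ⊥ ∧ H ⊔ K = ⊤ ∧
  ∀ X ∈ A.basicSets, ∃ X₁ ∈ A.basicSets, ∃ X₂ ∈ A.basicSets,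
    X₁ ⊆ (H : Set G) ∧ X₂ ⊆ (K : Set G) ∧ X = X₁ * X₂

/-- `𝒜` is the `U/L`-wreath product: `U`, `L` are `𝒜`-subgroups, `L ⊴ G`,
`L ≤ U`, and `L ≤ rad(X)` for every basic set `X` outside `U`. -/
def IsWreathSection (A : SchurRing G) (U L : Subgroup G) : Prop :=
  A.IsASubgroup U ∧ A.IsASubgroup L ∧ L ≤ U ∧ L.Normal ∧
  ∀ X ∈ A.basicSets, ¬ X ⊆ (U : Set G) →
    ∀ g ∈ L, (g * ·) '' X = X ∧ (· * g) '' X = X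

end SchurRing

/-- A finite group is a Schur group if every S-ring over it is schurian. -/
def IsSchurGroup (G : Type*) [Group G] [Fintype G] : Prop :=
  ∀ A : SchurRing G, A.IsSchurian

/-- A Cayley isomorphism between S-rings: a group isomorphism mapping the
basic sets of `𝒜` onto the basic sets of `𝒜'`. -/
def IsCayleyIso {G G' : Type*} [Group G] [Fintype G] [Group G'] [Fintype G']
    (A : SchurRing G) (A' : SchurRing G') (f : G ≃* G') : Prop :=
  (fun X : Set G => ⇑f '' X) '' A.basicSets = A'.basicSets

/-!
Let `𝒜` be an S-ring over `E₉`. If all basic sets are closed under inversion, then they are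
determined by a partition of the four subgroups of order three. If none of these is an
`𝒜`-subgroup, each is glued to another one, so they split into two pairs `⟨a⟩, ⟨b⟩` and
`⟨ab⟩, ⟨ab⁻¹⟩`; mapping `a` to `1` and `b` to a square root `ω` of `-1` in `𝔽₉` makes
multiplication by `ω` preserve the basic sets, and `⟨ω⟩` has index two in `𝔽₉ˣ`. If exactly one is
an `𝒜`-subgroup, the other three are glued together and `𝒜` is a wreath product. If `⟨a⟩` and `⟨b⟩`
are `𝒜`-subgroups, then `𝒜` is their tensor product when `⟨ab⟩` and `⟨ab⁻¹⟩` are glued, and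
`Cyc({±1}, 𝔽₉)` otherwise.

If some basic set `X` is not closed under inversion, then `X` and `X⁻¹` are disjoint in
`E₉ ∖ {1}`, so `|X| ≤ 4`. Counting quotients excludes `|X| = 4`. If `|X| = 3`, the complement of
`X ∪ X⁻¹` is an `𝒜`-subgroup `K`, and a parity count shows that `X` is a coset of `K`, so that `𝒜`
is a wreath product. If `|X| ≤ 2`, there is a basic set `{l}` with `l ≠ 1`, and then `𝒜` is a
tensor product if some complement of `⟨l⟩` is an `𝒜`-subgroup, and a wreath product otherwise.
-/

namespace SchurRing

section Autocorrelation

variable {G : Type*} [Group G]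

/-- The autocorrelation of `X` at `z`: the coefficient of `z` in `\underline{X⁻¹} \underline{X}`. -/
noncomputable def autocorr (X : Set G) (z : G) : ℕ := {u ∈ X | u * z ∈ X}.ncard

theorem autocorr_one (X : Set G) : autocorr X 1 = X.ncard := by
  simp [autocorr]

theorem autocorr_inv (X : Set G) (z : G) : autocorr X z⁻¹ = autocorr X z := by
  have h : {u ∈ X | u * z⁻¹ ∈ X} = MulOpposite.op z • {u ∈ X | u * z ∈ X} := by
    ext u
    simp [Set.mem_smul_set_iff_inv_smul_mem, and_comm]
  rw [autocorr, h, Set.ncard_smul_set, autocorr]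

theorem sum_autocorr [Fintype G] (X : Set G) : ∑ z, autocorr X z = X.ncard ^ 2 := by
  classical
  have htranslate : ∀ u : G, {z | u * z ∈ X}.ncard = X.ncard := fun u => by
    rw [← Set.ncard_smul_set u⁻¹ X]
    congr 1
    ext z
    simp [Set.mem_smul_set_iff_inv_smul_mem]
  have hcount := Finset.sum_card_bipartiteAbove_eq_sum_card_bipartiteBelow
    (s := X.toFinset) (t := Finset.univ) fun u z => u * z ∈ X
  simp only [Finset.bipartiteAbove, Finset.bipartiteBelow] at hcount
  calc ∑ z, autocorr X z = ∑ u ∈ X.toFinset, {z | u * z ∈ X}.ncard := by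
        simp only [autocorr, Set.ncard_eq_toFinset_card', Set.toFinset_ofPred]
        rw [hcount]
        refine Finset.sum_congr rfl fun z _ => congr_arg Finset.card ?_
        ext
        simp
    _ = X.ncard ^ 2 := by
        simp only [htranslate, Finset.sum_const, Set.ncard_eq_toFinset_card', smul_eq_mul, sq]

end Autocorrelation

section Group

variable {G : Type*} [Group G] [Fintype G] {A : SchurRing G}

/-- Two elements of `G` are in the same class if they lie in the same basic set. -/
def SameClass (A : SchurRing G) (x y : G) : Prop := ∃ X ∈ A.basicSets, x ∈ X ∧ y ∈ X

/-- The basic set containing `x`. -/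
def cell (A : SchurRing G) (x : G) : Set G := {y | A.SameClass x y}

@[simp]
theorem mem_cell {x y : G} : y ∈ A.cell x ↔ A.SameClass x y := Iff.rfl

theorem eq_of_mem_of_mem {X Y : Set G} (hX : X ∈ A.basicSets) (hY : Y ∈ A.basicSets) {x : G}
    (hxX : x ∈ X) (hxY : x ∈ Y) : X = Y := by
  by_contra hne
  exact (A.disjoint' X hX Y hY hne).subset ⟨hxX, hxY⟩

theorem cell_eq_of_mem {X : Set G} (hX : X ∈ A.basicSets) {x : G} (hx : x ∈ X) : A.cell x = X :=
  Set.ext fun _ => ⟨fun ⟨_, hY, hxY, hyY⟩ => eq_of_mem_of_mem hX hY hx hxY ▸ hyY,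
    fun hy => ⟨X, hX, hx, hy⟩⟩

theorem cell_mem_basicSets (x : G) : A.cell x ∈ A.basicSets := by
  obtain ⟨X, hX, hx⟩ := A.cover x
  rwa [cell_eq_of_mem hX hx]

theorem SameClass.refl (x : G) : A.SameClass x x :=
  let ⟨X, hX, hx⟩ := A.cover x
  ⟨X, hX, hx, hx⟩

theorem SameClass.symm {x y : G} : A.SameClass x y → A.SameClass y x :=
  fun ⟨X, hX, hx, hy⟩ => ⟨X, hX, hy, hx⟩

theorem SameClass.trans {x y z : G} (hxy : A.SameClass x y) (hyz : A.SameClass y z) :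
    A.SameClass x z := by
  obtain ⟨X, hX, hx, hy⟩ := hxy
  rw [← mem_cell, cell_eq_of_mem hX hy] at hyz
  exact ⟨X, hX, hx, hyz⟩

theorem SameClass.inv {x y : G} : A.SameClass x y → A.SameClass x⁻¹ y⁻¹ :=
  fun ⟨X, hX, hx, hy⟩ => ⟨X⁻¹, A.inv_mem X hX, by simpa, by simpa⟩

theorem SameClass.inv_left {x y : G} (h : A.SameClass x⁻¹ y) : A.SameClass x y⁻¹ := by
  simpa using h.inv

theorem sameClass_one {x : G} : A.SameClass 1 x ↔ x = 1 := by
  rw [← mem_cell, cell_eq_of_mem A.one_mem rfl, Set.mem_singleton_iff]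

theorem cell_inv (x : G) : A.cell x⁻¹ = (A.cell x)⁻¹ :=
  Set.ext fun _ => ⟨fun h => h.inv_left, fun h => by simpa using h.inv⟩

theorem isASet_iff {S : Set G} : A.IsASet S ↔ ∀ x y, A.SameClass x y → x ∈ S → y ∈ S := by
  constructor
  · rintro ⟨T, hT, rfl⟩ x y hxy ⟨X, hXT, hx⟩
    exact ⟨X, hXT, by rwa [← cell_eq_of_mem (hT hXT) hx]⟩
  · intro h
    refine ⟨{X ∈ A.basicSets | X ⊆ S}, Set.sep_subset _ _, Set.Subset.antisymm (fun x hx => ?_)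
      (Set.sUnion_subset fun X hX => hX.2)⟩
    exact ⟨A.cell x, ⟨cell_mem_basicSets x, fun y hy => h x y hy hx⟩, .refl x⟩

theorem IsASet.mem_iff {S : Set G} (hS : A.IsASet S) {x y : G} (h : A.SameClass x y) :
    x ∈ S ↔ y ∈ S :=
  ⟨isASet_iff.1 hS x y h, isASet_iff.1 hS y x h.symm⟩

theorem isASet_cell (x : G) : A.IsASet (A.cell x) :=
  isASet_iff.2 fun _ _ hyz hxy => SameClass.trans hxy hyz

theorem IsASet.inv {S : Set G} (hS : A.IsASet S) : A.IsASet S⁻¹ :=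
  isASet_iff.2 fun _ _ hxy hx => (hS.mem_iff hxy.inv).1 hx

theorem IsASet.compl {S : Set G} (hS : A.IsASet S) : A.IsASet Sᶜ :=
  isASet_iff.2 fun _ _ hxy hx hy => hx ((hS.mem_iff hxy).2 hy)

theorem IsASet.union {S T : Set G} (hS : A.IsASet S) (hT : A.IsASet T) : A.IsASet (S ∪ T) :=
  isASet_iff.2 fun _ _ hxy => Or.imp (hS.mem_iff hxy).1 (hT.mem_iff hxy).1

/-! ### Structure constants -/

open Classical in
theorem coeff_grpSum (X : Set G) (g : G) : (grpSum X).coeff g = if g ∈ X then 1 else 0 := by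
  simp only [grpSum, Set.indicator_apply, MonoidAlgebra.coeff_sum, Finsupp.finsetSum_apply,
    apply_ite (fun f : MonoidAlgebra ℤ G => f.coeff g), MonoidAlgebra.coeff_single,
    MonoidAlgebra.coeff_zero, Finsupp.single_apply, Finsupp.zero_apply]
  rw [Finset.sum_eq_single g] <;> simp +contextual

theorem coeff_grpSum_mul_grpSum (S T : Set G) (z : G) :
    (grpSum S * grpSum T).coeff z = ({u ∈ S | u⁻¹ * z ∈ T}.ncard : ℤ) := by
  classical
  rw [MonoidAlgebra.coeff_mul_antidiag _ _ z (Finset.univ.image fun u : G => (u, u⁻¹ * z)),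
    Finset.sum_image fun u _ v _ h => congr_arg Prod.fst h]
  · simp [coeff_grpSum, ← ite_and, and_comm, Set.ncard_eq_toFinset_card']
  · rintro ⟨u, v⟩
    simp [eq_inv_mul_iff_mul_eq, eq_comm]

theorem coeff_eq_of_mem_span {f : MonoidAlgebra ℤ G}
    (hf : f ∈ Submodule.span ℤ (grpSum '' A.basicSets)) {z w : G} (h : A.SameClass z w) :
    f.coeff z = f.coeff w := by
  classical
  induction hf using Submodule.span_induction with
  | mem f hf =>
    obtain ⟨X, hX, rfl⟩ := hf
    have hmem : z ∈ X ↔ w ∈ X := IsASet.mem_iff ⟨{X}, by simpa, by simp⟩ h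
    simp only [coeff_grpSum, hmem]
  | zero => rfl
  | add f g _ _ hf hg => simp only [MonoidAlgebra.coeff_add, Finsupp.add_apply, hf, hg]
  | smul n f _ hf => simp only [MonoidAlgebra.coeff_smul_apply, hf]

theorem grpSum_sUnion {T : Set (Set G)} (hT : T ⊆ A.basicSets) :
    grpSum (⋃₀ T) = ∑ X ∈ T.toFinite.toFinset, grpSum X := by
  classical
  ext g
  have hmem : g ∈ ⋃₀ T ↔ A.cell g ∈ T :=
    ⟨fun ⟨X, hX, hg⟩ => cell_eq_of_mem (hT hX) hg ▸ hX, fun h => ⟨_, h, .refl g⟩⟩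
  have hcell : ∀ X ∈ T, g ∈ X ↔ X = A.cell g := fun X hX =>
    ⟨fun hg => (cell_eq_of_mem (hT hX) hg).symm, fun h => h ▸ SameClass.refl g⟩
  simp only [MonoidAlgebra.coeff_sum, Finsupp.finsetSum_apply, coeff_grpSum, hmem]
  rw [Finset.sum_congr rfl fun X hX => if_congr (hcell X (by simpa using hX)) rfl rfl]
  simp

theorem IsASet.grpSum_mem_span {S : Set G} (hS : A.IsASet S) :
    grpSum S ∈ Submodule.span ℤ (grpSum '' A.basicSets) := by
  obtain ⟨T, hT, rfl⟩ := hS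
  rw [grpSum_sUnion hT]
  exact Submodule.sum_mem _ fun X hX => Submodule.subset_span ⟨X, hT (by simpa using hX), rfl⟩

theorem mul_mem_span {f g : MonoidAlgebra ℤ G}
    (hf : f ∈ Submodule.span ℤ (grpSum '' A.basicSets))
    (hg : g ∈ Submodule.span ℤ (grpSum '' A.basicSets)) :
    f * g ∈ Submodule.span ℤ (grpSum '' A.basicSets) := by
  have hle : Submodule.span ℤ (grpSum '' A.basicSets) * Submodule.span ℤ (grpSum '' A.basicSets) ≤
      Submodule.span ℤ (grpSum '' A.basicSets) := by
    rw [Submodule.span_mul_span, Submodule.span_le]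
    rintro _ ⟨_, ⟨X, hX, rfl⟩, _, ⟨Y, hY, rfl⟩, rfl⟩
    exact A.mul_mem X hX Y hY
  exact hle (Submodule.mul_mem_mul hf hg)

theorem ncard_factorizations_eq {S T : Set G} (hS : A.IsASet S) (hT : A.IsASet T) {z w : G}
    (h : A.SameClass z w) :
    {u ∈ S | u⁻¹ * z ∈ T}.ncard = {u ∈ S | u⁻¹ * w ∈ T}.ncard := by
  have hcoeff := coeff_eq_of_mem_span (mul_mem_span hS.grpSum_mem_span hT.grpSum_mem_span) h
  rw [coeff_grpSum_mul_grpSum, coeff_grpSum_mul_grpSum] at hcoeff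
  exact_mod_cast hcoeff

theorem IsASet.mul {S T : Set G} (hS : A.IsASet S) (hT : A.IsASet T) : A.IsASet (S * T) := by
  refine isASet_iff.2 fun z w hzw hz => ?_
  have hpos : ∀ z, 0 < {u ∈ S | u⁻¹ * z ∈ T}.ncard ↔ z ∈ S * T := fun z => by
    rw [Set.ncard_pos, Set.mem_mul]
    exact ⟨fun ⟨u, hu, hv⟩ => ⟨u, hu, _, hv, mul_inv_cancel_left u z⟩,
      fun ⟨u, hu, v, hv, huv⟩ => ⟨u, hu, by rwa [← huv, inv_mul_cancel_left]⟩⟩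
  rwa [← hpos, ← ncard_factorizations_eq hS hT hzw, hpos]

/-! ### Thin elements -/

theorem SameClass.mul_left {g x y : G} (hg : ∀ z, A.SameClass g z → z = g)
    (h : A.SameClass x y) : A.SameClass (g * x) (g * y) := by
  have hcell : A.cell g = {g} :=
    Set.Subset.antisymm hg (Set.singleton_subset_iff.2 (SameClass.refl g))
  have hset : A.IsASet ({g⁻¹} * A.cell (g * x)) := by
    rw [← Set.inv_singleton, ← hcell]
    exact (isASet_cell g).inv.mul (isASet_cell _)
  have hx : x ∈ ({g⁻¹} * A.cell (g * x) : Set G) := by simp [SameClass.refl]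
  simpa using (hset.mem_iff h).1 hx

/-- The thin radical of `A`: the subgroup of all `g` such that `{g}` is a basic set. -/
def thinRadical (A : SchurRing G) : Subgroup G where
  carrier := {g | ∀ y, A.SameClass g y → y = g}
  one_mem' _ := sameClass_one.1
  mul_mem' {g h} hg hh y hy := by
    have hg' : ∀ z, A.SameClass g⁻¹ z → z = g⁻¹ := fun z hz => by
      rw [← hg _ hz.inv_left, inv_inv]
    rw [← hh _ (by simpa using hy.mul_left hg'), mul_inv_cancel_left]
  inv_mem' {g} hg y hy := by rw [← hg _ hy.inv_left, inv_inv]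

theorem SameClass.eq_of_mem_thinRadical {g y : G} (h : A.SameClass g y)
    (hg : g ∈ A.thinRadical) : y = g := hg y h

theorem SameClass.mul_left_of_mem_thinRadical {g x y : G} (h : A.SameClass x y)
    (hg : g ∈ A.thinRadical) : A.SameClass (g * x) (g * y) := h.mul_left hg

theorem isASubgroup_of_le_thinRadical {H : Subgroup G} (hH : H ≤ A.thinRadical) :
    A.IsASubgroup H :=
  isASet_iff.2 fun _ _ hxy hx => hxy.eq_of_mem_thinRadical (hH hx) ▸ hx

/-! ### Recognizing tensor and wreath products -/

theorem isTensorDecomp_of_sameClass_mul {H K : Subgroup G} (hH : A.IsASubgroup H)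
    (hK : A.IsASubgroup K) (hHK : H.IsComplement' K)
    (h : ∀ x ∈ H, ∀ x', A.SameClass x x' → ∀ y ∈ K, ∀ y', A.SameClass y y' →
      A.SameClass (x * y) (x' * y')) :
    A.IsTensorDecomp H K := by
  refine ⟨hH, hK, hHK.disjoint.eq_bot, hHK.sup_eq_top, fun X hX => ?_⟩
  obtain ⟨z, hz⟩ := A.nonempty_mem X hX
  obtain rfl := cell_eq_of_mem hX hz
  obtain ⟨⟨⟨x, hx⟩, ⟨y, hy⟩⟩, rfl⟩ := hHK.surjective z
  refine ⟨_, cell_mem_basicSets x, _, cell_mem_basicSets y, fun _ h => (hH.mem_iff h).1 hx,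
    fun _ h => (hK.mem_iff h).1 hy, Set.Subset.antisymm (fun w hw => ?_) ?_⟩
  · exact (((isASet_cell x).mul (isASet_cell y)).mem_iff hw).1
      (Set.mul_mem_mul (SameClass.refl x) (SameClass.refl y))
  · rintro _ ⟨x', hx', y', hy', rfl⟩
    exact h x hx x' hx' y hy y' hy'

/-! ### Basic sets that are not closed under inversion -/

theorem disjoint_cell_cell_inv {x : G} (hx : ¬ A.SameClass x x⁻¹) :
    Disjoint (A.cell x) (A.cell x⁻¹) :=
  Set.disjoint_left.2 fun _ hy hy' => hx (hy.trans hy'.symm)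

theorem ncard_cell_union_cell_inv {x : G} (hx : ¬ A.SameClass x x⁻¹) :
    (A.cell x ∪ A.cell x⁻¹).ncard = 2 * (A.cell x).ncard := by
  rw [Set.ncard_union_eq (disjoint_cell_cell_inv hx), cell_inv, Set.ncard_inv, two_mul]

theorem IsASet.autocorr_eq {X : Set G} (hX : A.IsASet X) {z w : G} (h : A.SameClass z w) :
    autocorr X z = autocorr X w := by
  have hinv : ∀ z, autocorr X z = {u ∈ X⁻¹ | u⁻¹ * z ∈ X}.ncard := fun z => by
    rw [autocorr, ← Set.ncard_inv]
    rfl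
  rw [hinv, hinv, ncard_factorizations_eq hX.inv hX h]

theorem cell_union_cell_inv_subset {x : G} (hx : ¬ A.SameClass x x⁻¹) :
    A.cell x ∪ A.cell x⁻¹ ⊆ {1}ᶜ := by
  rintro _ (h | h) rfl
  · exact hx (by simp [sameClass_one.1 h.symm, SameClass.refl])
  · exact hx (by simp [inv_eq_one.1 (sameClass_one.1 h.symm), SameClass.refl])

theorem two_mul_ncard_cell_lt {x : G} (hx : ¬ A.SameClass x x⁻¹) :
    2 * (A.cell x).ncard < Nat.card G := by
  rw [← ncard_cell_union_cell_inv hx]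
  exact Set.ncard_lt_card fun h => cell_union_cell_inv_subset hx (h.superset (Set.mem_univ 1)) rfl

/-- Counting the quotients `u⁻¹ * v` of elements of the basic set `X` of `x`: each element
of `X ∪ X⁻¹` occurs equally often, so `|X| (|X| - 1)` is a multiple of `2 |X|`. -/
theorem odd_ncard_cell {x : G} (hx : ¬ A.SameClass x x⁻¹)
    (hcompl : A.cell x ∪ A.cell x⁻¹ = {1}ᶜ) : Odd (A.cell x).ncard := by
  classical
  have hauto : ∀ z ≠ 1, autocorr (A.cell x) z = autocorr (A.cell x) x := fun z hz => by
    rcases hcompl.superset hz with hz | hz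
    · exact ((isASet_cell x).autocorr_eq hz).symm
    · rw [← (isASet_cell x).autocorr_eq hz, autocorr_inv]
  have hcard : 2 * (A.cell x).ncard = Fintype.card G - 1 := by
    rw [← ncard_cell_union_cell_inv hx, hcompl, Set.ncard_compl, Set.ncard_singleton,
      Nat.card_eq_fintype_card]
  have hsum := sum_autocorr (A.cell x)
  rw [← Finset.add_sum_erase _ _ (Finset.mem_univ 1), autocorr_one,
    Finset.sum_congr rfl fun z hz => hauto z (Finset.ne_of_mem_erase hz), Finset.sum_const,
    Finset.card_erase_of_mem (Finset.mem_univ 1), Finset.card_univ, ← hcard, smul_eq_mul] at hsum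
  have hpos : 0 < (A.cell x).ncard := (Set.ncard_pos).2 ⟨x, .refl x⟩
  exact ⟨autocorr (A.cell x) x, Nat.eq_of_mul_eq_mul_left hpos (by linarith)⟩

end Group

section CommGroup

variable {G : Type*} [CommGroup G] [Fintype G] {A : SchurRing G}

theorem isWreathSection_zpowers {a : G} (ha : A.IsASubgroup (Subgroup.zpowers a))
    (h : ∀ x ∉ Subgroup.zpowers a, A.SameClass x (a * x)) :
    A.IsWreathSection (Subgroup.zpowers a) (Subgroup.zpowers a) := by
  refine ⟨ha, ha, le_rfl, inferInstance, fun X hX hXa g hg => ?_⟩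
  obtain ⟨y, hy, hya⟩ := Set.not_subset.1 hXa
  obtain rfl := cell_eq_of_mem hX hy
  have hstab : a ∈ MulAction.stabilizer G (A.cell y) :=
    (MulAction.mem_stabilizer_set' (Set.toFinite _)).2 fun x hx =>
      hx.trans (h x fun hxa => hya ((ha.mem_iff hx).2 hxa))
  have hg' : (g * ·) '' A.cell y = A.cell y :=
    MulAction.mem_stabilizer_iff.1 (Subgroup.zpowers_le.2 hstab hg)
  exact ⟨hg', by simpa only [mul_comm] using hg'⟩

/-- If `g ∈ K` moved `x` out of its basic set `X`, then `X` would meet the coset of `x⁻¹`, and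
the cosets of `x` and `x⁻¹` would meet `X` in `n` and in `|K| - n` elements; as `K` is a union
of basic sets, these numbers agree. -/
theorem sameClass_mul_of_odd_card {K : Subgroup G} (hK : A.IsASubgroup K)
    (hodd : Odd (Nat.card K)) {x : G} (hx : ¬ A.SameClass x x⁻¹)
    (hcompl : A.cell x ∪ A.cell x⁻¹ = (K : Set G)ᶜ) {g : G} (hg : g ∈ K) :
    A.SameClass x (g * x) := by
  have hxK : x ∉ K := hcompl.subset (.inl (SameClass.refl x))
  have hinv : ∀ v ∈ K, A.SameClass x⁻¹ (v * x) ↔ ¬ A.SameClass x (v * x) := fun v hv =>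
    ⟨fun h h' => hx (h'.trans h.symm), (hcompl.superset
      fun h => hxK ((K.mul_mem_cancel_left hv).1 h)).resolve_left⟩
  by_contra hgx
  have hcount := ncard_factorizations_eq hK (isASet_cell x) ((hinv g hg).2 hgx).inv_left
  have hflip : {v ∈ (K : Set G) | v⁻¹ * (g * x)⁻¹ ∈ A.cell x} =
      g⁻¹ • ((K : Set G) \ {v | v⁻¹ * x ∈ A.cell x})⁻¹ := by
    ext v
    simp only [Set.mem_smul_set_iff_inv_smul_mem, Set.mem_inv, inv_inv, smul_eq_mul, Set.mem_sdiff,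
      Set.mem_ofPred_eq, mem_cell, SetLike.mem_coe, mul_inv_rev, K.mul_mem_cancel_right,
      K.inv_mem_iff, hg]
    refine and_congr_right fun hv => ?_
    have hprod : v⁻¹ * (x⁻¹ * g⁻¹) = (g * v * x)⁻¹ := by
      rw [← mul_inv, ← mul_inv, mul_comm x, mul_left_comm, mul_assoc]
    rw [hprod, ← hinv _ (K.mul_mem hg hv)]
    exact ⟨fun h => by simpa using h.inv, fun h => by simpa using h.inv⟩
  rw [hflip, Set.ncard_smul_set, Set.ncard_inv] at hcount
  have hadd := Set.ncard_inter_add_ncard_sdiff_eq_ncard (K : Set G) {v | v⁻¹ * x ∈ A.cell x}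
  rw [← hcount] at hadd
  exact Nat.not_even_iff_odd.2 hodd ⟨_, hadd.symm⟩

theorem mul_mem_thinRadical_of_cell_eq_pair {x u v : G} (hx : A.cell x = {u, v})
    (huv : u ^ 2 ≠ v ^ 2) : u * v ∈ A.thinRadical := by
  intro z hz
  have hfull : {w ∈ A.cell x | w⁻¹ * (u * v) ∈ A.cell x} = A.cell x :=
    Set.sep_eq_self_iff_mem_true.2 fun w hw => by
      rw [hx] at hw ⊢
      rcases hw with rfl | rfl
      · simp
      · simp [mul_comm]
  have hfull' : {w ∈ A.cell x | w⁻¹ * z ∈ A.cell x} = A.cell x := by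
    refine Set.eq_of_subset_of_ncard_le (Set.sep_subset _ _) ?_
    rw [← ncard_factorizations_eq (isASet_cell x) (isASet_cell x) hz, hfull]
  have hmem : ∀ w ∈ ({u, v} : Set G), w⁻¹ * z ∈ ({u, v} : Set G) := by
    rw [← hx]
    exact Set.sep_eq_self_iff_mem_true.1 hfull'
  have hu : z = u ^ 2 ∨ z = u * v := by
    simpa [inv_mul_eq_iff_eq_mul, sq] using hmem u (by simp)
  have hv : z = v * u ∨ z = v ^ 2 := by
    simpa [inv_mul_eq_iff_eq_mul, sq] using hmem v (by simp)
  grind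

end CommGroup

end SchurRing

/-! ### Elementary abelian groups of order nine -/

theorem mem_zpowers_iff_of_pow_three {G : Type*} [Group G] {x : G} (hx : x ^ 3 = 1) {g : G} :
    g ∈ Subgroup.zpowers x ↔ g = 1 ∨ g = x ∨ g = x⁻¹ := by
  constructor
  · rintro ⟨n, rfl⟩
    have hmod : x ^ n = x ^ (n % 3) := zpow_eq_zpow_emod n (by exact_mod_cast hx)
    have hsq : x ^ 2 = x⁻¹ := eq_inv_of_mul_eq_one_left (by rw [← pow_succ, hx])
    obtain h | h | h : n % 3 = 0 ∨ n % 3 = 1 ∨ n % 3 = 2 := by lia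
    · simp [hmod, h]
    · simp [hmod, h]
    · exact .inr (.inr (hmod.trans (by rw [h, ← hsq, zpow_ofNat])))
  · rintro (rfl | rfl | rfl) <;> simp

theorem exists_basis_of_natCard_eq_prime_sq {p : ℕ} [Fact p.Prime] {V : Type*} [AddCommGroup V]
    [Module (ZMod p) V] (hV : Nat.card V = p ^ 2) {v w : V} (hv : v ≠ 0)
    (hw : w ∉ AddSubgroup.zmultiples v) :
    ∃ B : Module.Basis (Fin 2) (ZMod p) V, B 0 = v ∧ B 1 = w := by
  have := Nat.finite_of_card_ne_zero (hV.trans_ne (pow_ne_zero 2 (NeZero.ne p)))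
  have hrank : Module.finrank (ZMod p) V = 2 := by
    rw [Module.natCard_eq_pow_finrank (K := ZMod p), Nat.card_zmod] at hV
    exact Nat.pow_right_injective (Fact.out : p.Prime).two_le hV
  have hind : LinearIndependent (ZMod p) ![v, w] := (LinearIndependent.pair_iff' hv).2
    fun k hk => hw (AddSubgroup.mem_zmultiples_iff.2 ⟨k.cast, by
      rw [← Int.cast_smul_eq_zsmul (ZMod p), ZMod.intCast_zmod_cast, hk]⟩)
  refine ⟨basisOfLinearIndependentOfCardEqFinrank hind (by simp [hrank]), ?_, ?_⟩ <;> simp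

/-- `G` has order nine and exponent dividing three; for commutative `G` this says that `G` is
the elementary abelian group `E₉`. -/
structure IsE9 (G : Type*) [Group G] : Prop where
  card_eq_nine : Nat.card G = 9
  pow_three : ∀ x : G, x ^ 3 = 1

namespace IsE9

section Group

variable {G : Type*} [Group G]

theorem mem_zpowers_iff (hG : IsE9 G) {x g : G} :
    g ∈ Subgroup.zpowers x ↔ g = 1 ∨ g = x ∨ g = x⁻¹ :=
  mem_zpowers_iff_of_pow_three (hG.pow_three x)

theorem card_zpowers (hG : IsE9 G) {x : G} (hx : x ≠ 1) : Nat.card (Subgroup.zpowers x) = 3 := by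
  rw [Nat.card_zpowers, orderOf_eq_prime (hG.pow_three x) hx]

theorem isComplement'_zpowers (hG : IsE9 G) {a b : G} (ha : a ≠ 1)
    (hb : b ∉ Subgroup.zpowers a) :
    (Subgroup.zpowers a).IsComplement' (Subgroup.zpowers b) := by
  have hb1 : b ≠ 1 := ne_of_mem_of_not_mem (one_mem (Subgroup.zpowers a)) hb |>.symm
  have := Nat.finite_of_card_ne_zero (by simp [hG.card_eq_nine] : Nat.card G ≠ 0)
  refine Subgroup.isComplement'_of_card_mul_and_disjoint
    (by rw [hG.card_zpowers ha, hG.card_zpowers hb1, hG.card_eq_nine])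
    (Subgroup.disjoint_def.2 fun {x} hxa hxb => ?_)
  rcases hG.mem_zpowers_iff.1 hxb with rfl | rfl | rfl
  · rfl
  · exact absurd hxa hb
  · exact absurd (inv_mem_iff.1 hxa) hb

theorem exists_mem_zpowers_coset (hG : IsE9 G) {a b : G} (ha : a ≠ 1)
    (hb : b ∉ Subgroup.zpowers a) (w : G) :
    ∃ m ∈ Subgroup.zpowers a, w = m ∨ w = m * b ∨ w = m * b⁻¹ := by
  obtain ⟨⟨⟨m, hm⟩, ⟨n, hn⟩⟩, rfl⟩ := (hG.isComplement'_zpowers ha hb).surjective w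
  refine ⟨m, hm, ?_⟩
  rcases hG.mem_zpowers_iff.1 hn with rfl | rfl | rfl <;> simp

theorem notMem_zpowers_symm (hG : IsE9 G) {a b : G} (ha : a ≠ 1)
    (hb : b ∉ Subgroup.zpowers a) : a ∉ Subgroup.zpowers b := fun hab =>
  ha (Subgroup.disjoint_def.1 (hG.isComplement'_zpowers ha hb).disjoint
    (Subgroup.mem_zpowers a) hab)

theorem exists_notMem_zpowers (hG : IsE9 G) (a : G) : ∃ b, b ∉ Subgroup.zpowers a := by
  by_contra! h
  have hcard : Nat.card (Subgroup.zpowers a) = 9 := by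
    rw [(Subgroup.eq_top_iff' _).2 h, Subgroup.card_top, hG.card_eq_nine]
  have hle := orderOf_le_of_pow_eq_one three_pos (hG.pow_three a)
  rw [Nat.card_zpowers] at hcard
  lia

theorem exists_independent (hG : IsE9 G) : ∃ a ≠ (1 : G), ∃ b, b ∉ Subgroup.zpowers a := by
  obtain ⟨a, ha⟩ := hG.exists_notMem_zpowers 1
  have ha1 : a ≠ 1 := ne_of_mem_of_not_mem (Subgroup.one_mem _) ha |>.symm
  exact ⟨a, ha1, hG.exists_notMem_zpowers a⟩

end Group

section CommGroup

variable {G : Type*} [CommGroup G]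

theorem mem_zpowers_cover (hG : IsE9 G) {a b : G} (ha : a ≠ 1) (hb : b ∉ Subgroup.zpowers a)
    (g : G) : g ∈ Subgroup.zpowers a ∨ g ∈ Subgroup.zpowers b ∨ g ∈ Subgroup.zpowers (a * b) ∨
      g ∈ Subgroup.zpowers (a * b⁻¹) := by
  obtain ⟨m, hm, h⟩ := hG.exists_mem_zpowers_coset ha hb g
  simp only [hG.mem_zpowers_iff] at hm ⊢
  rcases hm with rfl | rfl | rfl <;> rcases h with rfl | rfl | rfl <;> simp [mul_comm]

end CommGroup

theorem exists_mulEquiv {G H : Type*} [CommGroup G] [CommGroup H] (hG : IsE9 G) (hH : IsE9 H)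
    {a b : G} {c d : H} (ha : a ≠ 1) (hb : b ∉ Subgroup.zpowers a) (hc : c ≠ 1)
    (hd : d ∉ Subgroup.zpowers c) : ∃ f : G ≃* H, f a = c ∧ f b = d := by
  let _ : Module (ZMod 3) (Additive G) := AddCommGroup.zmodModule hG.pow_three
  let _ : Module (ZMod 3) (Additive H) := AddCommGroup.zmodModule hH.pow_three
  obtain ⟨B, hBa, hBb⟩ := exists_basis_of_natCard_eq_prime_sq (p := 3) (V := Additive G)
    hG.card_eq_nine (v := .ofMul a) (w := .ofMul b) ha fun h => hb h
  obtain ⟨C, hCc, hCd⟩ := exists_basis_of_natCard_eq_prime_sq (p := 3) (V := Additive H)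
    hH.card_eq_nine (v := .ofMul c) (w := .ofMul d) hc fun h => hd h
  let e := B.equiv C (Equiv.refl (Fin 2))
  refine ⟨MulEquiv.toAdditive.symm e.toAddEquiv, ?_, ?_⟩
  · exact (congr_arg e hBa.symm).trans ((B.equiv_apply 0 C _).trans hCc)
  · exact (congr_arg e hBb.symm).trans ((B.equiv_apply 1 C _).trans hCd)

end IsE9

/-! ### Fields of order nine -/

theorem mem_zpowers_neg_one {R : Type*} [Ring R] {u : Rˣ} :
    u ∈ Subgroup.zpowers (-1 : Rˣ) ↔ u = 1 ∨ u = -1 := by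
  constructor
  · rintro ⟨k, rfl⟩
    obtain ⟨c, rfl | rfl⟩ := k.even_or_odd'
    · simp [zpow_mul]
    · simp [zpow_mul, zpow_add]
  · rintro (rfl | rfl) <;> simp

section Field

variable {F : Type*} [Field F]

theorem three_eq_zero_of_card_eq_nine (hF : Nat.card F = 9) : (3 : F) = 0 := by
  have h : (3 : F) ^ 2 = 0 := calc
    (3 : F) ^ 2 = Nat.card F • 1 := by rw [hF]; norm_num
    _ = 0 := card_nsmul_eq_zero'
  exact pow_eq_zero_iff two_ne_zero |>.1 h

theorem isE9_multiplicative (hF : Nat.card F = 9) : IsE9 (Multiplicative F) where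
  card_eq_nine := hF
  pow_three x := congr_arg Multiplicative.ofAdd (by
    rw [nsmul_eq_mul, Nat.cast_ofNat, three_eq_zero_of_card_eq_nine hF, zero_mul] :
    3 • x.toAdd = 0)

theorem exists_sq_eq_neg_one_of_card_eq_nine (hF : Nat.card F = 9) : ∃ ω : Fˣ, ω ^ 2 = -1 := by
  have := Nat.finite_of_card_ne_zero (by simp [hF] : Nat.card F ≠ 0)
  have := Fintype.ofFinite F
  obtain ⟨ω, hω⟩ := FiniteField.isSquare_neg_one_iff.2
    (by rw [← Nat.card_eq_fintype_card, hF]; norm_num : Fintype.card F % 4 ≠ 3)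
  have hω0 : ω ≠ 0 := by rintro rfl; simp at hω
  exact ⟨Units.mk0 ω hω0, Units.ext (by simp [sq, hω])⟩

theorem neg_one_ne_one_of_card_eq_nine (hF : Nat.card F = 9) : (-1 : F) ≠ 1 := fun h =>
  one_ne_zero (by linear_combination three_eq_zero_of_card_eq_nine hF + h : (1 : F) = 0)

theorem index_zpowers_eq_two_of_sq_eq_neg_one (hF : Nat.card F = 9) {ω : Fˣ} (hω : ω ^ 2 = -1) :
    (Subgroup.zpowers ω).index = 2 := by
  have hne : (-1 : Fˣ) ≠ 1 := fun h => neg_one_ne_one_of_card_eq_nine hF (congr_arg Units.val h)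
  have horder : orderOf ω = 2 ^ (1 + 1) :=
    orderOf_eq_prime_pow (by simpa [hω] using hne) (by rw [pow_succ, pow_mul]; simp [hω])
  have hcard := (Subgroup.zpowers ω).card_mul_index
  rw [Nat.card_zpowers, horder, Nat.card_units, hF] at hcard
  lia

theorem ofAdd_notMem_zpowers_ofAdd_one (hF : Nat.card F = 9) {ω : Fˣ} (hω : ω ^ 2 = -1) :
    Multiplicative.ofAdd (ω : F) ∉ Subgroup.zpowers (Multiplicative.ofAdd (1 : F)) := by
  have hω' : (ω : F) ^ 2 = -1 := congr_arg Units.val hω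
  have hne : (ω : F) ^ 2 ≠ 1 := hω'.trans_ne (neg_one_ne_one_of_card_eq_nine hF)
  rw [(isE9_multiplicative hF).mem_zpowers_iff]
  rintro (h | h | h) <;> replace h : (ω : F) = _ := congr_arg Multiplicative.toAdd h
  · exact ω.ne_zero h
  · exact hne (by simp [h])
  · exact hne (by simp [h])

end Field

namespace SchurRing

/-! ### `𝒜`-subgroups of order three -/

section Group

variable {G : Type*} [Group G] [Fintype G] {A : SchurRing G}

theorem isASubgroup_zpowers {x : G} (hx : x ^ 3 = 1)
    (h : ∀ y, A.SameClass x y → y ∈ Subgroup.zpowers x) :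
    A.IsASubgroup (Subgroup.zpowers x) := by
  refine isASet_iff.2 fun g y hgy hg => ?_
  rcases (mem_zpowers_iff_of_pow_three hx).1 hg with rfl | rfl | rfl
  · rw [sameClass_one.1 hgy]
    exact Subgroup.one_mem _
  · exact h y hgy
  · exact inv_mem_iff.1 (h _ hgy.inv_left)

theorem isASubgroup_zpowers_of_mem {c d : G} (hd3 : d ^ 3 = 1) (hc : c ∈ Subgroup.zpowers d)
    (hd : A.IsASubgroup (Subgroup.zpowers d)) : A.IsASubgroup (Subgroup.zpowers c) := by
  rcases (mem_zpowers_iff_of_pow_three hd3).1 hc with rfl | rfl | rfl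
  · rw [Subgroup.zpowers_one_eq_bot]
    exact isASubgroup_of_le_thinRadical bot_le
  · exact hd
  · rwa [Subgroup.zpowers_inv]

end Group

/-! ### The three families of S-rings over `E₉` -/

section Families

variable {G : Type*} [Group G] [Fintype G]

/-- `A` is Cayley isomorphic to `Cyc(M, F)` for some nontrivial subgroup `M` of `Fˣ`; the
additive group of `F` is written as `Multiplicative F`. -/
def IsCycOver (A : SchurRing G) (F : Type*) [Field F] : Prop :=
  ∃ M : Subgroup Fˣ, ⊥ < M ∧ ∃ f : G ≃* Multiplicative F,
    (fun X : Set G => ⇑f '' X) '' A.basicSets =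
      Set.range fun x : F => ⇑Multiplicative.ofAdd '' MulAction.orbit M x

/-- `A` is the tensor product of two S-rings over groups of order three. -/
def HasC3TensorDecomp (A : SchurRing G) : Prop :=
  ∃ C D : Subgroup G, Nat.card C = 3 ∧ Nat.card D = 3 ∧ A.IsTensorDecomp C D

/-- `A`, an S-ring over a group of order nine, is the wreath product of two S-rings over groups
of order three: the `U/L`-wreath product with `U = L`. -/
def HasC3WreathDecomp (A : SchurRing G) : Prop :=
  ∃ L : Subgroup G, Nat.card L = 3 ∧ A.IsWreathSection L L

end Families

variable {G : Type*} [CommGroup G] [Fintype G] {A : SchurRing G}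

theorem hasC3WreathDecomp_of_sameClass_mul (hG : IsE9 G) {a : G} (ha1 : a ≠ 1)
    (ha : A.IsASubgroup (Subgroup.zpowers a))
    (h : ∀ x ∉ Subgroup.zpowers a, A.SameClass x (a * x)) : A.HasC3WreathDecomp :=
  ⟨_, hG.card_zpowers ha1, isWreathSection_zpowers ha h⟩

theorem hasC3TensorDecomp_of_sameClass_mul (hG : IsE9 G) {a b : G} (ha1 : a ≠ 1)
    (ha : A.IsASubgroup (Subgroup.zpowers a)) (hba : b ∉ Subgroup.zpowers a)
    (hb : A.IsASubgroup (Subgroup.zpowers b))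
    (h : ∀ x ∈ Subgroup.zpowers a, ∀ x', A.SameClass x x' → ∀ y ∈ Subgroup.zpowers b, ∀ y',
      A.SameClass y y' → A.SameClass (x * y) (x' * y')) : A.HasC3TensorDecomp :=
  ⟨_, _, hG.card_zpowers ha1, hG.card_zpowers (by rintro rfl; exact hba (Subgroup.one_mem _)),
    isTensorDecomp_of_sameClass_mul ha hb (hG.isComplement'_zpowers ha1 hba) h⟩

/-! ### S-rings with a nontrivial thin element -/

theorem eq_one_of_sameClass_mul (hG : IsE9 G) {l : G} (hl : l ∈ A.thinRadical) {x : G}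
    (hlx : ¬ A.SameClass x (l * x)) {m : G} (hm : m ∈ Subgroup.zpowers l)
    (hmx : A.SameClass x (m * x)) : m = 1 := by
  rcases hG.mem_zpowers_iff.1 hm with rfl | rfl | rfl
  · rfl
  · exact absurd hmx hlx
  · exact absurd (by simpa using (hmx.mul_left_of_mem_thinRadical hl).symm) hlx

theorem eq_or_exists_eq_mul_inv_of_sameClass (hG : IsE9 G) {l : G} (hl1 : l ≠ 1)
    (hl : l ∈ A.thinRadical) {x : G} (hx : x ∉ Subgroup.zpowers l)
    (hlx : ¬ A.SameClass x (l * x)) {y : G} (hxy : A.SameClass x y) :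
    y = x ∨ ∃ m ∈ Subgroup.zpowers l, y = m * x⁻¹ := by
  have hL : A.IsASubgroup (Subgroup.zpowers l) :=
    isASubgroup_of_le_thinRadical (Subgroup.zpowers_le.2 hl)
  obtain ⟨m, hm, rfl | rfl | rfl⟩ := hG.exists_mem_zpowers_coset hl1 hx y
  · exact absurd ((hL.mem_iff hxy).2 hm) hx
  · exact .inl (by rw [eq_one_of_sameClass_mul hG hl hlx hm hxy, one_mul])
  · exact .inr ⟨m, hm, rfl⟩

/-- Translating the basic set `{x, m * x⁻¹}` by `m` yields the inverse pair `{m * x, m² * x⁻¹}`. -/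
theorem mem_zpowers_mul_of_sameClass_mul_inv (hG : IsE9 G) {l : G} (hl1 : l ≠ 1)
    (hl : l ∈ A.thinRadical) {x : G} (hx : x ∉ Subgroup.zpowers l)
    (hlx : ¬ A.SameClass x (l * x)) {m : G} (hm : m ∈ Subgroup.zpowers l)
    (hmx : A.SameClass x (m * x⁻¹)) {y : G} (hy : A.SameClass (m * x) y) :
    y ∈ Subgroup.zpowers (m * x) := by
  have hthin : ∀ m ∈ Subgroup.zpowers l, m ∈ A.thinRadical := fun m hm =>
    Subgroup.zpowers_le.2 hl hm
  have hxy : A.SameClass x (m⁻¹ * y) := by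
    simpa using hy.mul_left_of_mem_thinRadical (Subgroup.inv_mem _ (hthin m hm))
  rcases eq_or_exists_eq_mul_inv_of_sameClass hG hl1 hl hx hlx hxy with h | ⟨m', hm', h⟩
  · rw [eq_mul_of_inv_mul_eq h]
    exact Subgroup.mem_zpowers _
  · have hmm' : m' = m := by
      have := ((h ▸ hxy).symm.trans hmx).inv.mul_left_of_mem_thinRadical (hthin m' hm')
      exact mul_inv_eq_one.1 (eq_one_of_sameClass_mul hG hl hlx
        (Subgroup.mul_mem _ hm' (Subgroup.inv_mem _ hm))
        (by simpa [mul_assoc, mul_comm x] using this))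
    have hsq : m * m = m⁻¹ := eq_inv_of_mul_eq_one_left (by rw [← hG.pow_three m, pow_three'])
    have hy : y = (m * x)⁻¹ := by rw [eq_mul_of_inv_mul_eq h, hmm', ← mul_assoc, hsq, mul_inv]
    exact hy ▸ Subgroup.inv_mem _ (Subgroup.mem_zpowers _)

theorem exists_isASubgroup_zpowers_of_not_sameClass (hG : IsE9 G) {l : G} (hl1 : l ≠ 1)
    (hl : l ∈ A.thinRadical) {x : G} (hx : x ∉ Subgroup.zpowers l)
    (hlx : ¬ A.SameClass x (l * x)) :
    ∃ b ∉ Subgroup.zpowers l, A.IsASubgroup (Subgroup.zpowers b) := by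
  by_cases hpair : ∃ m ∈ Subgroup.zpowers l, A.SameClass x (m * x⁻¹)
  · obtain ⟨m, hm, hmx⟩ := hpair
    exact ⟨m * x, fun h => hx ((Subgroup.mul_mem_cancel_left _ hm).1 h),
      isASubgroup_zpowers (hG.pow_three _) fun _ =>
        mem_zpowers_mul_of_sameClass_mul_inv hG hl1 hl hx hlx hm hmx⟩
  · refine ⟨x, hx, isASubgroup_zpowers (hG.pow_three x) fun y hy => ?_⟩
    rcases eq_or_exists_eq_mul_inv_of_sameClass hG hl1 hl hx hlx hy with rfl | ⟨m, hm, rfl⟩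
    · exact Subgroup.mem_zpowers _
    · exact absurd ⟨m, hm, hy⟩ hpair

theorem hasC3TensorDecomp_or_hasC3WreathDecomp_of_mem_thinRadical (hG : IsE9 G) {l : G}
    (hl1 : l ≠ 1) (hl : l ∈ A.thinRadical) : A.HasC3TensorDecomp ∨ A.HasC3WreathDecomp := by
  have hL : Subgroup.zpowers l ≤ A.thinRadical := Subgroup.zpowers_le.2 hl
  by_cases hb : ∃ b ∉ Subgroup.zpowers l, A.IsASubgroup (Subgroup.zpowers b)
  · obtain ⟨b, hbl, hb⟩ := hb
    refine .inl (hasC3TensorDecomp_of_sameClass_mul hG hl1 (isASubgroup_of_le_thinRadical hL)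
      hbl hb fun x hx x' hxx' y _ y' hyy' => ?_)
    rw [hxx'.eq_of_mem_thinRadical (hL hx)]
    exact hyy'.mul_left_of_mem_thinRadical (hL hx)
  · refine .inr (hasC3WreathDecomp_of_sameClass_mul hG hl1 (isASubgroup_of_le_thinRadical hL)
      fun x hx => ?_)
    by_contra hlx
    exact hb (exists_isASubgroup_zpowers_of_not_sameClass hG hl1 hl hx hlx)

/-! ### S-rings with a basic set not closed under inversion -/

theorem exists_ne_one_mem_thinRadical_of_ncard_cell_eq_two (hG : IsE9 G) {x : G}
    (hx : ¬ A.SameClass x x⁻¹) (hcard : (A.cell x).ncard = 2) :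
    ∃ l ≠ 1, l ∈ A.thinRadical := by
  obtain ⟨u, v, huv, hcell⟩ := Set.ncard_eq_two.1 hcard
  have hu : A.SameClass x u := hcell.superset (.inl rfl)
  have hv : A.SameClass x v := hcell.superset (.inr rfl)
  refine ⟨u * v, fun h => hx ?_, mul_mem_thinRadical_of_cell_eq_pair hcell fun h => huv ?_⟩
  · rw [← inv_eq_of_mul_eq_one_right h] at hv
    exact hv.trans hu.inv.symm
  · calc u = (u ^ 2)⁻¹ := by rw [eq_inv_iff_mul_eq_one, ← pow_succ', hG.pow_three]
      _ = v := by rw [h, inv_eq_iff_mul_eq_one, ← pow_succ, hG.pow_three]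

theorem hasC3WreathDecomp_of_ncard_cell_eq_three (hG : IsE9 G) {x : G}
    (hx : ¬ A.SameClass x x⁻¹) (hcard : (A.cell x).ncard = 3) : A.HasC3WreathDecomp := by
  let S := (A.cell x ∪ A.cell x⁻¹)ᶜ
  have hS : A.IsASet S := ((isASet_cell x).union (isASet_cell x⁻¹)).compl
  have hScard : S.ncard = 3 := by
    rw [Set.ncard_compl, ncard_cell_union_cell_inv hx, hcard, hG.card_eq_nine]
  obtain ⟨k, hkS, hk1⟩ := Set.exists_ne_of_one_lt_ncard (by lia : 1 < S.ncard) 1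
  have hk : (Subgroup.zpowers k : Set G) = S := by
    refine Set.eq_of_subset_of_ncard_le (fun g hg => ?_) ?_
    · rcases hG.mem_zpowers_iff.1 hg with rfl | rfl | rfl
      · exact fun h => cell_union_cell_inv_subset hx h rfl
      · exact hkS
      · exact fun h => hkS (by simpa [cell_inv, or_comm] using h)
    · rw [hScard, ← hG.card_zpowers hk1]
      rfl
  have hodd : Odd (Nat.card (Subgroup.zpowers k)) := by
    rw [hG.card_zpowers hk1]
    decide
  have hKA : A.IsASubgroup (Subgroup.zpowers k) := by rwa [IsASubgroup, hk]
  refine hasC3WreathDecomp_of_sameClass_mul hG hk1 hKA fun y hy => ?_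
  have hstab : ∀ g ∈ Subgroup.zpowers k, ∀ y, A.SameClass x y → A.SameClass y (g * y) := by
    intro g hg y hxy
    have hy : ¬ A.SameClass y y⁻¹ := fun h => hx ((hxy.trans h).trans hxy.inv.symm)
    refine sameClass_mul_of_odd_card hKA hodd hy ?_ hg
    rw [hk, compl_compl, cell_inv, cell_inv, cell_eq_of_mem (cell_mem_basicSets x) hxy]
  obtain h | h : y ∈ A.cell x ∪ A.cell x⁻¹ := by
    by_contra h
    exact hy (hk.superset h)
  · exact hstab k (Subgroup.mem_zpowers k) y h
  · simpa [mul_comm] using (hstab k⁻¹ (Subgroup.inv_mem _ (Subgroup.mem_zpowers k)) y⁻¹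
      h.inv_left).inv

theorem ncard_cell_ne_four (hG : IsE9 G) {x : G} (hx : ¬ A.SameClass x x⁻¹) :
    (A.cell x).ncard ≠ 4 := fun hcard => by
  have hcompl : A.cell x ∪ A.cell x⁻¹ = {1}ᶜ :=
    Set.eq_of_subset_of_ncard_le (cell_union_cell_inv_subset hx) (by
      rw [Set.ncard_compl, Set.ncard_singleton, hG.card_eq_nine, ncard_cell_union_cell_inv hx,
        hcard])
  have hodd := odd_ncard_cell hx hcompl
  rw [hcard] at hodd
  exact absurd hodd (by decide)

theorem exists_mem_thinRadical_or_hasC3WreathDecomp (hG : IsE9 G) {x : G}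
    (hx : ¬ A.SameClass x x⁻¹) : (∃ l ≠ 1, l ∈ A.thinRadical) ∨ A.HasC3WreathDecomp := by
  have hlt := two_mul_ncard_cell_lt hx
  rw [hG.card_eq_nine] at hlt
  have hpos : 0 < (A.cell x).ncard := (Set.ncard_pos (Set.toFinite _)).2 ⟨x, .refl x⟩
  have hne := ncard_cell_ne_four hG hx
  obtain h | h | h : (A.cell x).ncard = 1 ∨ (A.cell x).ncard = 2 ∨ (A.cell x).ncard = 3 := by lia
  · refine .inl ⟨x, fun hx1 => hx (by simp [hx1, SameClass.refl]), fun y hy => ?_⟩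
    exact (Set.ncard_le_one (Set.toFinite _)).1 h.le y hy x (.refl x)
  · exact .inl (exists_ne_one_mem_thinRadical_of_ncard_cell_eq_two hG hx h)
  · exact .inr (hasC3WreathDecomp_of_ncard_cell_eq_three hG hx h)

/-! ### Recognizing cyclotomic S-rings -/

section Cyclotomic

variable {G F : Type*} [Group G] [Field F]

theorem exists_unit_mul_toAdd_eq (f : G ≃* Multiplicative F) {x y : G} (hx : x ≠ 1)
    (hy : y ≠ 1) : ∃ u : Fˣ, u * (f x).toAdd = (f y).toAdd := by
  have hne : ∀ z ≠ 1, (f z).toAdd ≠ 0 := fun z hz => by simpa using hz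
  exact ⟨Units.mk0 _ (hne y hy) / Units.mk0 _ (hne x hx), by simp [hne x hx]⟩

variable [Fintype G] {A : SchurRing G}

theorem isCycOver_of_sameClass_iff {M : Subgroup Fˣ} (hM : ⊥ < M) (f : G ≃* Multiplicative F)
    (h : ∀ x y, A.SameClass x y ↔ ∃ u ∈ M, u * (f x).toAdd = (f y).toAdd) : A.IsCycOver F := by
  have himage : ∀ x, f '' A.cell x =
      ⇑Multiplicative.ofAdd '' MulAction.orbit M (f x).toAdd := fun x => by
    ext y
    constructor
    · rintro ⟨z, hz, rfl⟩
      obtain ⟨u, hu, huz⟩ := (h x z).1 hz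
      exact ⟨_, ⟨⟨u, hu⟩, huz⟩, rfl⟩
    · rintro ⟨_, ⟨⟨u, hu⟩, rfl⟩, rfl⟩
      exact ⟨f.symm (.ofAdd (u * (f x).toAdd)), (h x _).2 ⟨u, hu, by simp⟩, f.apply_symm_apply _⟩
  refine ⟨M, hM, f, Set.ext fun X => ⟨?_, ?_⟩⟩
  · rintro ⟨Y, hY, rfl⟩
    obtain ⟨x, hx⟩ := A.nonempty_mem Y hY
    exact ⟨(f x).toAdd, by simp only [← cell_eq_of_mem hY hx, himage]⟩
  · rintro ⟨v, rfl⟩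
    exact ⟨_, cell_mem_basicSets (f.symm (.ofAdd v)), by simp [himage]⟩

theorem isCycOver_of_forall_sameClass (hF : ⊥ < (⊤ : Subgroup Fˣ)) (f : G ≃* Multiplicative F)
    (h : ∀ x ≠ 1, ∀ y ≠ 1, A.SameClass x y) : A.IsCycOver F := by
  refine isCycOver_of_sameClass_iff hF f fun x y => ?_
  rcases eq_or_ne x 1 with rfl | hx
  · simp [sameClass_one, eq_comm (a := (0 : F))]
  rcases eq_or_ne y 1 with rfl | hy
  · simp [hx, mt (fun h : A.SameClass x 1 => sameClass_one.1 h.symm) hx]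
  · obtain ⟨u, hu⟩ := exists_unit_mul_toAdd_eq f hx hy
    exact iff_of_true (h x hx y hy) ⟨u, Subgroup.mem_top u, hu⟩

/-- The multipliers of `A` with respect to an identification `f` of `G` with the additive group
of `F`: the scalars that map each element of `G` into its own basic set. -/
def multipliers (A : SchurRing G) (f : G ≃* Multiplicative F) : Subgroup Fˣ where
  carrier := {u | ∀ x y, u * (f x).toAdd = (f y).toAdd → A.SameClass x y}
  one_mem' x y hxy := by
    obtain rfl : x = y := by simpa using hxy
    exact .refl x
  mul_mem' {u v} hu hv x y hxy := by
    have hv' := hv x (f.symm (.ofAdd (v * (f x).toAdd))) (by simp)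
    exact hv'.trans (hu _ _ (by simpa [mul_assoc] using hxy))
  inv_mem' {u} hu x y hxy := (hu y x (by simp [← hxy])).symm

theorem isCycOver_of_index_eq_two {M : Subgroup Fˣ} (hM : ⊥ < M) (hindex : M.index = 2)
    {f : G ≃* Multiplicative F} (hMf : M ≤ A.multipliers f) : A.IsCycOver F := by
  by_cases hall : ∀ x ≠ 1, ∀ y ≠ 1, A.SameClass x y
  · exact isCycOver_of_forall_sameClass (hM.trans_le le_top) f hall
  refine isCycOver_of_sameClass_iff hM f fun x y =>
    ⟨fun hxy => ?_, fun ⟨u, hu, huxy⟩ => hMf hu x y huxy⟩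
  rcases eq_or_ne x 1 with rfl | hx
  · exact ⟨1, M.one_mem, by simp [sameClass_one.1 hxy]⟩
  have hy : y ≠ 1 := fun hy => hx (sameClass_one.1 (hy ▸ hxy.symm))
  obtain ⟨u, hu⟩ := exists_unit_mul_toAdd_eq f hx hy
  refine ⟨u, by_contra fun huM => hall ?_, hu⟩
  have hxz : ∀ z ≠ 1, A.SameClass x z := fun z hz => by
    obtain ⟨v, hv⟩ := exists_unit_mul_toAdd_eq f hx hz
    by_cases hvM : v ∈ M
    · exact hMf hvM x z hv
    · have hvu : v * u⁻¹ ∈ M :=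
        (Subgroup.mul_mem_iff_of_index_two hindex).2 (iff_of_false hvM (by simpa using huM))
      exact hxy.trans (hMf hvu y z (by simp [← hu, ← hv, mul_assoc]))
  exact fun z hz w hw => (hxz z hz).symm.trans (hxz w hw)

end Cyclotomic

/-! ### Symmetric S-rings -/

/-- `A` is symmetric: every basic set is closed under inversion. -/
def IsSymmetric {G : Type*} [Group G] [Fintype G] (A : SchurRing G) : Prop :=
  ∀ x, A.SameClass x x⁻¹

variable {G : Type*} [CommGroup G] [Fintype G] {A : SchurRing G}

theorem IsSymmetric.sameClass_of_mem_zpowers (hA : A.IsSymmetric) (hG : IsE9 G) {c g : G}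
    (hg : g ∈ Subgroup.zpowers c) (hg1 : g ≠ 1) : A.SameClass c g := by
  rcases hG.mem_zpowers_iff.1 hg with rfl | rfl | rfl
  · exact absurd rfl hg1
  · exact .refl _
  · exact hA _

theorem IsSymmetric.exists_sameClass_of_not_isASubgroup (hA : A.IsSymmetric) (hG : IsE9 G)
    {a b c : G} (ha : a ≠ 1) (hb : b ∉ Subgroup.zpowers a)
    (hc : ¬ A.IsASubgroup (Subgroup.zpowers c)) :
    ∃ d, (d = a ∨ d = b ∨ d = a * b ∨ d = a * b⁻¹) ∧ d ∉ Subgroup.zpowers c ∧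
      A.SameClass c d := by
  obtain ⟨y, hcy, hy⟩ : ∃ y, A.SameClass c y ∧ y ∉ Subgroup.zpowers c := by
    by_contra! h
    exact hc (isASubgroup_zpowers (hG.pow_three c) h)
  have hy1 : y ≠ 1 := fun h => hy (h ▸ Subgroup.one_mem _)
  have hline : ∀ d, y ∈ Subgroup.zpowers d → d ∉ Subgroup.zpowers c ∧ A.SameClass c d :=
    fun d hd => ⟨fun h => hy (Subgroup.zpowers_le.2 h hd),
      hcy.trans (hA.sameClass_of_mem_zpowers hG hd hy1).symm⟩
  rcases hG.mem_zpowers_cover ha hb y with h | h | h | h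
  exacts [⟨a, by simp, hline a h⟩, ⟨b, by simp, hline b h⟩, ⟨_, by simp, hline _ h⟩,
    ⟨_, by simp, hline _ h⟩]

theorem IsSymmetric.exists_sameClass_of_forall_not_isASubgroup (hA : A.IsSymmetric) (hG : IsE9 G)
    (h : ∀ c ≠ 1, ¬ A.IsASubgroup (Subgroup.zpowers c)) :
    ∃ a ≠ 1, ∃ b ∉ Subgroup.zpowers a, A.SameClass a b ∧ A.SameClass (a * b) (a * b⁻¹) := by
  obtain ⟨a, ha1, e, he⟩ := hG.exists_independent
  obtain ⟨b, -, hb, hab⟩ := hA.exists_sameClass_of_not_isASubgroup hG ha1 he (h a ha1)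
  have hsum : a * b ≠ 1 := fun h => hb (by
    rw [← inv_eq_of_mul_eq_one_right h]; exact Subgroup.inv_mem _ (Subgroup.mem_zpowers a))
  have hdiff : a * b⁻¹ ≠ 1 := fun h => hb (by
    rw [← mul_inv_eq_one.1 h]; exact Subgroup.mem_zpowers a)
  refine ⟨a, ha1, b, hb, hab, ?_⟩
  obtain ⟨d, hd, hdc, hd'⟩ := hA.exists_sameClass_of_not_isASubgroup hG ha1 hb (h _ hsum)
  obtain ⟨d', hd₂, hdc₂, hd₂'⟩ := hA.exists_sameClass_of_not_isASubgroup hG ha1 hb (h _ hdiff)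
  have hdab : A.SameClass a d ∨ d = a * b⁻¹ := by
    rcases hd with rfl | rfl | rfl | rfl
    exacts [.inl (.refl _), .inl hab, absurd (Subgroup.mem_zpowers _) hdc, .inr rfl]
  have hdab' : A.SameClass a d' ∨ d' = a * b := by
    rcases hd₂ with rfl | rfl | rfl | rfl
    exacts [.inl (.refl _), .inl hab, .inr rfl, absurd (Subgroup.mem_zpowers _) hdc₂]
  rcases hdab with had | rfl
  · rcases hdab' with had' | rfl
    · exact hd'.trans (had.symm.trans (had'.trans hd₂'.symm))
    · exact hd₂'.symm
  · exact hd'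

theorem IsSymmetric.hasC3WreathDecomp_of_unique (hA : A.IsSymmetric) (hG : IsE9 G) {a : G}
    (ha1 : a ≠ 1) (ha : A.IsASubgroup (Subgroup.zpowers a))
    (h : ∀ b ∉ Subgroup.zpowers a, ¬ A.IsASubgroup (Subgroup.zpowers b)) :
    A.HasC3WreathDecomp := by
  refine hasC3WreathDecomp_of_sameClass_mul hG ha1 ha fun x hx => ?_
  have hpartner : ∀ c ∉ Subgroup.zpowers a, ∃ d, (d = x ∨ d = a * x ∨ d = a * x⁻¹) ∧
      d ∉ Subgroup.zpowers c ∧ A.SameClass c d := fun c hc => by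
    obtain ⟨d, hd, hdc⟩ := hA.exists_sameClass_of_not_isASubgroup hG ha1 hx (h c hc)
    refine ⟨d, hd.resolve_left ?_, hdc⟩
    rintro rfl
    exact hc ((ha.mem_iff hdc.2).2 (Subgroup.mem_zpowers _))
  obtain ⟨d, rfl | rfl | rfl, hdc, hd⟩ := hpartner x hx
  · exact absurd (Subgroup.mem_zpowers _) hdc
  · exact hd
  · have hax : a * x ∉ Subgroup.zpowers a := fun h =>
      hx ((Subgroup.mul_mem_cancel_left _ (Subgroup.mem_zpowers a)).1 h)
    obtain ⟨d, rfl | rfl | rfl, hdc, hd'⟩ := hpartner _ hax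
    · exact hd'.symm
    · exact absurd (Subgroup.mem_zpowers _) hdc
    · exact hd.trans hd'.symm

theorem IsSymmetric.hasC3TensorDecomp_of_sameClass (hA : A.IsSymmetric) (hG : IsE9 G) {a b : G}
    (ha1 : a ≠ 1) (ha : A.IsASubgroup (Subgroup.zpowers a)) (hba : b ∉ Subgroup.zpowers a)
    (hb : A.IsASubgroup (Subgroup.zpowers b)) (hab : A.SameClass (a * b) (a * b⁻¹)) :
    A.HasC3TensorDecomp := by
  have hprod : ∀ x ∈ Subgroup.zpowers a, x ≠ 1 → ∀ y ∈ Subgroup.zpowers b, y ≠ 1 →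
      A.SameClass (a * b) (x * y) := fun x hx hx1 y hy hy1 => by
    rcases (hG.mem_zpowers_iff.1 hx).resolve_left hx1 with rfl | rfl <;>
      rcases (hG.mem_zpowers_iff.1 hy).resolve_left hy1 with rfl | rfl
    · exact .refl _
    · exact hab
    · simpa [mul_comm] using hab.trans (hA _)
    · simpa [mul_comm] using hA (a * b)
  refine hasC3TensorDecomp_of_sameClass_mul hG ha1 ha hba hb fun x hx x' hxx' y hy y' hyy' => ?_
  rcases eq_or_ne x 1 with rfl | hx1
  · simpa [sameClass_one.1 hxx']
  rcases eq_or_ne y 1 with rfl | hy1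
  · simpa [sameClass_one.1 hyy']
  have hne : ∀ {z z'}, A.SameClass z z' → z ≠ 1 → z' ≠ 1 := fun hz hz1 hz' =>
    hz1 (sameClass_one.1 (hz' ▸ hz.symm))
  exact (hprod x hx hx1 y hy hy1).symm.trans (hprod x' ((ha.mem_iff hxx').1 hx) (hne hxx' hx1) y'
    ((hb.mem_iff hyy').1 hy) (hne hyy' hy1))

theorem IsSymmetric.isASubgroup_zpowers_mul (hA : A.IsSymmetric) (hG : IsE9 G) {a b : G}
    (ha1 : a ≠ 1) (ha : A.IsASubgroup (Subgroup.zpowers a)) (hba : b ∉ Subgroup.zpowers a)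
    (hb : A.IsASubgroup (Subgroup.zpowers b)) (hab : ¬ A.SameClass (a * b) (a * b⁻¹)) :
    A.IsASubgroup (Subgroup.zpowers (a * b)) := by
  by_contra h
  obtain ⟨d, hcase, hd, hd'⟩ := hA.exists_sameClass_of_not_isASubgroup hG ha1 hba h
  rcases hcase with h | h | h | h <;> subst d
  · exact hba ((Subgroup.mul_mem_cancel_left _ (Subgroup.mem_zpowers _)).1
      ((ha.mem_iff hd').2 (Subgroup.mem_zpowers _)))
  · exact hG.notMem_zpowers_symm ha1 hba ((Subgroup.mul_mem_cancel_right _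
      (Subgroup.mem_zpowers _)).1 ((hb.mem_iff hd').2 (Subgroup.mem_zpowers _)))
  · exact hd (Subgroup.mem_zpowers _)
  · exact hab hd'

theorem IsSymmetric.forall_isASubgroup_zpowers (hA : A.IsSymmetric) (hG : IsE9 G) {a b : G}
    (ha1 : a ≠ 1) (ha : A.IsASubgroup (Subgroup.zpowers a)) (hba : b ∉ Subgroup.zpowers a)
    (hb : A.IsASubgroup (Subgroup.zpowers b)) (hab : ¬ A.SameClass (a * b) (a * b⁻¹)) (c : G) :
    A.IsASubgroup (Subgroup.zpowers c) := by
  rcases hG.mem_zpowers_cover ha1 hba c with hc | hc | hc | hc <;>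
    refine isASubgroup_zpowers_of_mem (hG.pow_three _) hc ?_
  · exact ha
  · exact hb
  · exact hA.isASubgroup_zpowers_mul hG ha1 ha hba hb hab
  · refine hA.isASubgroup_zpowers_mul hG ha1 ha (by simpa using hba) (by simpa using hb) ?_
    rw [inv_inv]
    exact fun h => hab h.symm

section Field

variable {F : Type*} [Field F]

theorem IsSymmetric.isCycOver_of_forall_isASubgroup (hA : A.IsSymmetric) (hG : IsE9 G)
    (hF : Nat.card F = 9) (h : ∀ c, A.IsASubgroup (Subgroup.zpowers c)) : A.IsCycOver F := by
  have hM : ⊥ < Subgroup.zpowers (-1 : Fˣ) := by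
    rw [bot_lt_iff_ne_bot, Ne, Subgroup.zpowers_eq_bot]
    exact fun h => neg_one_ne_one_of_card_eq_nine hF (congr_arg Units.val h)
  obtain ⟨a, ha1, b, hb⟩ := hG.exists_independent
  obtain ⟨c, hc1, d, hd⟩ := (isE9_multiplicative hF).exists_independent
  obtain ⟨f, -⟩ := hG.exists_mulEquiv (isE9_multiplicative hF) ha1 hb hc1 hd
  refine isCycOver_of_sameClass_iff hM f fun x y => ?_
  have hxy : A.SameClass x y ↔ y = x ∨ y = x⁻¹ := by
    refine ⟨fun hxy => ?_, ?_⟩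
    · rcases hG.mem_zpowers_iff.1 (((h x).mem_iff hxy).1 (Subgroup.mem_zpowers x)) with rfl | hy
      · exact .inl (sameClass_one.1 hxy.symm).symm
      · exact hy
    · rintro (rfl | rfl)
      exacts [.refl _, hA _]
  simp only [hxy, mem_zpowers_neg_one, or_and_right, exists_or, exists_eq_left, Units.val_one,
    one_mul, Units.val_neg, neg_one_mul, ← toAdd_inv, ← map_inv, EmbeddingLike.apply_eq_iff_eq,
    eq_comm]

theorem IsSymmetric.mem_multipliers (hA : A.IsSymmetric) (hG : IsE9 G) {a b : G}
    (ha1 : a ≠ 1) (hba : b ∉ Subgroup.zpowers a) (hab : A.SameClass a b)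
    (hab' : A.SameClass (a * b) (a * b⁻¹)) {ω : Fˣ} (hω : ω ^ 2 = -1)
    {f : G ≃* Multiplicative F} (hfa : f a = .ofAdd 1) (hfb : f b = .ofAdd (ω : F)) :
    ω ∈ A.multipliers f := by
  have hω' : (ω : F) * ω = -1 := by simpa [sq] using congr_arg Units.val hω
  have hline : ∀ c d, ω * (f c).toAdd = (f d).toAdd → A.SameClass c d →
      ∀ x ∈ Subgroup.zpowers c, ∀ y, ω * (f x).toAdd = (f y).toAdd → A.SameClass x y := by
    intro c d hcd hsame x hx y hxy
    rcases hG.mem_zpowers_iff.1 hx with rfl | rfl | rfl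
    · obtain rfl : y = 1 := by simpa using hxy.symm
      exact .refl 1
    · obtain rfl : d = y := by simpa [hcd] using hxy
      exact hsame
    · obtain rfl : d⁻¹ = y := f.injective (Multiplicative.toAdd.injective
        (by simpa [hcd] using hxy))
      exact hsame.inv
  intro x
  rcases hG.mem_zpowers_cover ha1 hba x with hx | hx | hx | hx
  · exact hline a b (by simp [hfa, hfb]) hab x hx
  · exact hline b a⁻¹ (by simp [hfa, hfb, hω']) (hab.symm.trans (hA a)) x hx
  · exact hline (a * b) (a * b⁻¹)⁻¹ (by simp [hfa, hfb, mul_add, hω'])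
      (hab'.trans (hA _)) x hx
  · exact hline (a * b⁻¹) (a * b) (by simp [hfa, hfb, mul_add, hω', add_comm]) hab'.symm x hx

theorem IsSymmetric.isCycOver_of_sameClass (hA : A.IsSymmetric) (hG : IsE9 G)
    (hF : Nat.card F = 9) {a b : G} (ha1 : a ≠ 1) (hba : b ∉ Subgroup.zpowers a)
    (hab : A.SameClass a b) (hab' : A.SameClass (a * b) (a * b⁻¹)) : A.IsCycOver F := by
  obtain ⟨ω, hω⟩ := exists_sq_eq_neg_one_of_card_eq_nine hF
  obtain ⟨f, hfa, hfb⟩ := hG.exists_mulEquiv (isE9_multiplicative hF) ha1 hba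
    (by simp : Multiplicative.ofAdd (1 : F) ≠ 1) (ofAdd_notMem_zpowers_ofAdd_one hF hω)
  have hbot : ⊥ < Subgroup.zpowers ω := by
    rw [bot_lt_iff_ne_bot, Ne, Subgroup.zpowers_eq_bot]
    rintro rfl
    exact neg_one_ne_one_of_card_eq_nine hF (by simpa using congr_arg Units.val hω.symm)
  exact isCycOver_of_index_eq_two hbot (index_zpowers_eq_two_of_sq_eq_neg_one hF hω)
    (Subgroup.zpowers_le.2 (hA.mem_multipliers hG ha1 hba hab hab' hω hfa hfb))

theorem IsSymmetric.classification (hA : A.IsSymmetric) (hG : IsE9 G) (hF : Nat.card F = 9) :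
    A.IsCycOver F ∨ A.HasC3TensorDecomp ∨ A.HasC3WreathDecomp := by
  by_cases hline : ∃ a ≠ 1, A.IsASubgroup (Subgroup.zpowers a)
  · obtain ⟨a, ha1, ha⟩ := hline
    by_cases hline' : ∃ b ∉ Subgroup.zpowers a, A.IsASubgroup (Subgroup.zpowers b)
    · obtain ⟨b, hba, hb⟩ := hline'
      by_cases hab : A.SameClass (a * b) (a * b⁻¹)
      · exact .inr (.inl (hA.hasC3TensorDecomp_of_sameClass hG ha1 ha hba hb hab))
      · exact .inl (hA.isCycOver_of_forall_isASubgroup hG hF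
          (hA.forall_isASubgroup_zpowers hG ha1 ha hba hb hab))
    · push Not at hline'
      exact .inr (.inr (hA.hasC3WreathDecomp_of_unique hG ha1 ha hline'))
  · push Not at hline
    obtain ⟨a, ha1, b, hba, hab, hab'⟩ :=
      hA.exists_sameClass_of_forall_not_isASubgroup hG hline
    exact .inl (hA.isCycOver_of_sameClass hG hF ha1 hba hab hab')

end Field

end SchurRing

open SchurRing in
theorem srings_over_E9_classification_general {G F : Type*} [CommGroup G] [Fintype G] [Field F]
    (hG : IsE9 G) (hF : Nat.card F = 9) (A : SchurRing G) :
    A.IsCycOver F ∨ A.HasC3TensorDecomp ∨ A.HasC3WreathDecomp := by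
  by_cases hA : A.IsSymmetric
  · exact hA.classification hG hF
  · obtain ⟨x, hx⟩ := not_forall.1 hA
    rcases exists_mem_thinRadical_or_hasC3WreathDecomp hG hx with ⟨l, hl1, hl⟩ | hwreath
    · exact .inr (hasC3TensorDecomp_or_hasC3WreathDecomp_of_mem_thinRadical hG hl1 hl)
    · exact .inr (.inr hwreath)

theorem srings_over_E9_classification
    (A : SchurRing (Multiplicative (ZMod 3 × ZMod 3))) :
    -- (1) cyclotomic S-ring over the field 𝔽₉
    (∃ M : Subgroup (GaloisField 3 2)ˣ, ⊥ < M ∧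
      ∃ f : Multiplicative (ZMod 3 × ZMod 3) ≃* Multiplicative (GaloisField 3 2),
        (fun X : Set (Multiplicative (ZMod 3 × ZMod 3)) => ⇑f '' X) '' A.basicSets =
          Set.range fun x : GaloisField 3 2 =>
            ⇑Multiplicative.ofAdd '' MulAction.orbit M x) ∨
    -- (2) tensor product of two S-rings over C₃
    (∃ C D : Subgroup (Multiplicative (ZMod 3 × ZMod 3)),
      Nat.card C = 3 ∧ Nat.card D = 3 ∧ A.IsTensorDecomp C D) ∨
    -- (3) wreath product of two S-rings over C₃
    (∃ L : Subgroup (Multiplicative (ZMod 3 × ZMod 3)),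
      Nat.card L = 3 ∧ A.IsWreathSection L L) := by
  exact srings_over_E9_classification_general ⟨by simp, by decide⟩
    (by simpa using GaloisField.card 3 2 two_ne_zero) A
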